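/- Let φ_0 : [0,s_0] → [0,s_1] and φ_1 : [0,s_1] → [0,s_2] be grafting functions. Then the composition φ_1 ∘ φ_0 is a grafting function. -/

import Mathlib

open Set

/-- `φ` is a grafting function from `[0, s₀]` to `[0, s₁]`: there are countable sets
`X⁺ ⊆ [0, s₀)`, `X⁻ ⊆ [0, s₀]` and summable positive weights `δ⁺, δ⁻` on them such that
`φ(t) = t + ∑_{x < t, x ∈ X⁺} δ⁺(x) + ∑_{x ≤ t, x ∈ X⁻} δ⁻(x)` for `t ∈ [0, s₀]`,
and `φ` maps `[0, s₀]` into `[0, s₁]`. -/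
def IsGraftingFunction (s₀ s₁ : ℝ) (φ : ℝ → ℝ) : Prop :=
  ∃ (Xp Xm : Set ℝ) (δp δm : ℝ → ℝ),
    Xp.Countable ∧ Xm.Countable ∧
    Xp ⊆ Ico 0 s₀ ∧ Xm ⊆ Icc 0 s₀ ∧
    (∀ x ∈ Xp, 0 < δp x) ∧ (∀ x ∈ Xm, 0 < δm x) ∧
    Summable (fun x : Xp => δp x) ∧ Summable (fun x : Xm => δm x) ∧
    (∀ t ∈ Icc 0 s₀,
      φ t = t + (∑' x : ↥(Xp ∩ Iio t), δp x) + (∑' x : ↥(Xm ∩ Iic t), δm x)) ∧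
    (∀ t ∈ Icc 0 s₀, φ t ∈ Icc 0 s₁)

/-!
A grafting function is the identity plus a sum of weighted indicators of nonempty upper sets of
`[0, s₀]`. Indicators of arbitrary upper sets behave better than the half-lines of the definition:
they pull back along monotone maps, so `φ₁ ∘ φ₀ - id = (φ₁ - id) ∘ φ₀ + (φ₀ - id)` is again such a
sum. By compactness every nonempty upper set of `[0, s₀]` is a half-line `[x, s₀]` or `(x, s₀]`,
and adding up the weights of equal half-lines brings the sum back to the form of the definition.
-/

theorem countable_of_summable_of_pos {ι : Type*} {w : ι → ℝ} (hw : Summable w)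
    (hw₀ : ∀ i, 0 < w i) : Countable ι := by
  have support_eq : Function.support w = univ := eq_univ_of_forall fun i => (hw₀ i).ne'
  exact countable_univ_iff.1 (support_eq ▸ hw.countable_support)

section FiberSum

variable {ι β : Type*} (a : ι → β) {w : ι → ℝ}

/-- The pushforward along `a` of the weights `w`: the weight of a point is the total weight of its
fiber. -/
noncomputable def fiberSum (w : ι → ℝ) (x : β) : ℝ :=
  ∑' i : a ⁻¹' {x}, w i

theorem summable_fiberSum (hw : Summable w) : Summable (fiberSum a w) :=
  (hw.hasSum.tsum_fiberwise a).summable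

theorem fiberSum_pos (hw : Summable w) (hw₀ : ∀ i, 0 < w i) {x : β} (hx : x ∈ range a) :
    0 < fiberSum a w x := by
  obtain ⟨i, hi⟩ := hx
  exact (hw.subtype _).tsum_pos (fun j => (hw₀ j).le) ⟨i, hi⟩ (hw₀ i)

theorem indicator_fiberSum (T : Set β) (x : β) :
    T.indicator (fiberSum a w) x = fiberSum a ((a ⁻¹' T).indicator w) x := by
  have mem_preimage_iff (i : a ⁻¹' {x}) : ↑i ∈ a ⁻¹' T ↔ x ∈ T := by
    rw [mem_preimage, mem_singleton_iff.1 i.2]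
  by_cases hx : x ∈ T
  · simp [fiberSum, indicator, mem_preimage_iff, hx]
  · simp [fiberSum, indicator, mem_preimage_iff, hx]

theorem tsum_fiberSum (hw : Summable w) (T : Set β) :
    ∑' x : T, fiberSum a w x = ∑' i : a ⁻¹' T, w i := by
  rw [tsum_subtype, tsum_subtype, tsum_congr (indicator_fiberSum a T)]
  exact ((hw.indicator _).hasSum.tsum_fiberwise a).tsum_eq

theorem tsum_fiberSum_range_inter (hw : Summable w) (T : Set β) :
    ∑' x : ↥(range a ∩ T), fiberSum a w x = ∑' i : a ⁻¹' T, w i := by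
  rw [tsum_fiberSum a hw, preimage_range_inter]

end FiberSum

/-- `f` is a sum of weighted indicators `∑ i, w i • 1_{U i}` of nonempty upper sets, with summable
positive weights. The index type is any `ι : Type`; summability makes it countable. The sets `U i`
are nonempty so that a jump just after a point `x` (`U i = Ioi x`) never sits at the right end. -/
def IsJumpFunction {α : Type*} [Preorder α] (f : α → ℝ) : Prop :=
  ∃ (ι : Type) (w : ι → ℝ) (U : ι → Set α),
    (∀ i, 0 < w i) ∧ Summable w ∧ (∀ i, IsUpperSet (U i)) ∧ (∀ i, (U i).Nonempty) ∧
    ∀ t, HasSum ({i | t ∈ U i}.indicator w) (f t)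

namespace IsJumpFunction

section Preorder

variable {α β : Type*} [Preorder α] [Preorder β] {f g : α → ℝ}

theorem monotone (hf : IsJumpFunction f) : Monotone f := by
  obtain ⟨ι, w, U, hw₀, -, hU, -, hf⟩ := hf
  intro s t hst
  refine hasSum_le (fun i => ?_) (hf s) (hf t)
  exact indicator_le_indicator_of_subset (fun j => hU j hst) (fun j => (hw₀ j).le) i

theorem add (hf : IsJumpFunction f) (hg : IsJumpFunction g) :
    IsJumpFunction (fun t => f t + g t) := by
  obtain ⟨ι, w, U, hw₀, hw, hU, hU', hf⟩ := hf
  obtain ⟨κ, v, V, hv₀, hv, hV, hV', hg⟩ := hg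
  exact ⟨ι ⊕ κ, Sum.elim w v, Sum.elim U V, Sum.rec hw₀ hv₀, Summable.sum (Sum.elim w v) hw hv,
    Sum.rec hU hV, Sum.rec hU' hV',
    fun t => HasSum.sum (f := {i | t ∈ Sum.elim U V i}.indicator (Sum.elim w v)) (hf t) (hg t)⟩

theorem comp (hf : IsJumpFunction f) {u : β → α} (hu : Monotone u) :
    IsJumpFunction (fun t => f (u t)) := by
  obtain ⟨ι, w, U, hw₀, hw, hU, -, hf⟩ := hf
  let J : Set ι := {i | (u ⁻¹' U i).Nonempty}
  refine ⟨J, fun i => w i, fun i => u ⁻¹' U i, fun i => hw₀ i, hw.subtype J,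
    fun i => (hU i).preimage hu, fun i => i.2, fun t => ?_⟩
  have support_subset : Function.support ({i | u t ∈ U i}.indicator w) ⊆ J :=
    support_indicator_subset.trans fun i hi => ⟨t, hi⟩
  exact (hasSum_subtype_iff_of_support_subset support_subset).2 (hf (u t))

theorem tsum_inter_setOf_mem {κ : Type} {X : Set κ} {δ : κ → ℝ} {U : κ → Set α}
    (hδ₀ : ∀ x ∈ X, 0 < δ x) (hδ : Summable fun x : X => δ x)
    (hU : ∀ x ∈ X, IsUpperSet (U x)) (hU' : ∀ x ∈ X, (U x).Nonempty) :
    IsJumpFunction (fun t => ∑' x : ↥(X ∩ {x | t ∈ U x}), δ x) := by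
  refine ⟨X, fun x => δ x, fun x => U x, fun x => hδ₀ x x.2, hδ, fun x => hU x x.2,
    fun x => hU' x x.2, fun t => ?_⟩
  have tsum_eq : ∑' x : ↥(X ∩ {x | t ∈ U x}), δ x
      = ∑' x : X, {x : X | t ∈ U x}.indicator (fun x => δ x) x := by
    rw [tsum_subtype, ← indicator_indicator, ← tsum_subtype]
    rfl
  simp only [tsum_eq]
  exact (hδ.indicator _).hasSum

end Preorder

end IsJumpFunction

section LinearOrder

variable {α : Type*} [LinearOrder α] [TopologicalSpace α] [OrderTopology α] [CompactSpace α]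

theorem exists_eq_Ici_or_eq_Ioi_of_isUpperSet {U : Set α} (hU : IsUpperSet U)
    (hU' : U.Nonempty) : ∃ x, U = Ici x ∨ U = Ioi x := by
  obtain ⟨x, hx, hxU⟩ := isClosed_closure.isCompact.exists_isLeast hU'.closure
  have isGLB : IsGLB U x := isGLB_of_mem_closure (fun y hy => hxU (subset_closure hy)) hx
  have Ioi_subset : Ioi x ⊆ U := by
    intro y hxy
    obtain ⟨z, hz, -, hzy⟩ := isGLB.exists_between hxy
    exact hU hzy.le hz
  by_cases mem : x ∈ U
  · exact ⟨x, .inl (Subset.antisymm isGLB.1 (hU.Ici_subset mem))⟩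
  · have subset_Ioi : U ⊆ Ioi x := fun y hy => (isGLB.1 hy).lt_of_ne fun h => mem (h ▸ hy)
    exact ⟨x, .inr (Subset.antisymm subset_Ioi Ioi_subset)⟩

theorem IsJumpFunction.exists_eq_tsum_Iio_add_tsum_Iic {f : α → ℝ} (hf : IsJumpFunction f) :
    ∃ (ι κ : Type) (a : ι → α) (b : κ → α) (w : ι → ℝ) (v : κ → ℝ),
      (∀ i, ¬IsMax (a i)) ∧ (∀ i, 0 < w i) ∧ (∀ k, 0 < v k) ∧ Summable w ∧ Summable v ∧
      ∀ t, f t = ∑' i : a ⁻¹' Iio t, w i + ∑' k : b ⁻¹' Iic t, v k := by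
  obtain ⟨ι, w, U, hw₀, hw, hU, hU', hf⟩ := hf
  choose c hc using fun i => exists_eq_Ici_or_eq_Ioi_of_isUpperSet (hU i) (hU' i)
  let C : Set ι := {i | U i = Ici (c i)}
  have eq_Ioi (i : ↥Cᶜ) : U i = Ioi (c i) := (hc i).resolve_left i.2
  refine ⟨↥Cᶜ, C, fun i => c i, fun i => c i, fun i => w i, fun i => w i, fun i => ?_,
    fun i => hw₀ i, fun i => hw₀ i, hw.subtype _, hw.subtype _, fun t => ?_⟩
  · have nonempty_Ioi : (Ioi (c i)).Nonempty := eq_Ioi i ▸ hU' i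
    exact not_isMax_iff.2 nonempty_Ioi
  have preimage_Iio : (fun i : ↥Cᶜ => c i) ⁻¹' Iio t = {i : ↥Cᶜ | t ∈ U i} := by
    ext i
    simp [eq_Ioi i]
  have preimage_Iic : (fun i : C => c i) ⁻¹' Iic t = {i : C | t ∈ U i} := by
    ext i
    simp [show U i = Ici (c i) from i.2]
  rw [preimage_Iio, preimage_Iic, tsum_subtype _ fun i : ↥Cᶜ => w i,
    tsum_subtype _ fun i : C => w i, add_comm, ← (hf t).tsum_eq]
  exact ((hw.indicator _).tsum_subtype_add_tsum_subtype_compl C).symm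

end LinearOrder

namespace IsGraftingFunction

variable {s₀ s₁ : ℝ} {φ : ℝ → ℝ}

theorem isJumpFunction_sub_id (h : IsGraftingFunction s₀ s₁ φ) :
    IsJumpFunction (fun t : Icc 0 s₀ => φ t - t) := by
  obtain ⟨Xp, Xm, δp, δm, -, -, hXp, hXm, hδp₀, hδm₀, hδp, hδm, hφ, -⟩ := h
  have jump_Iio : IsJumpFunction fun t : Icc 0 s₀ => ∑' x : ↥(Xp ∩ Iio ↑t), δp x :=
    .tsum_inter_setOf_mem (κ := ℝ) (U := fun x => {t : Icc 0 s₀ | x < t}) hδp₀ hδp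
      (fun x _ => (isUpperSet_Ioi x).preimage (Subtype.mono_coe _))
      fun x hx => ⟨⟨s₀, (hXp hx).1.trans (hXp hx).2.le, le_rfl⟩, (hXp hx).2⟩
  have jump_Iic : IsJumpFunction fun t : Icc 0 s₀ => ∑' x : ↥(Xm ∩ Iic ↑t), δm x :=
    .tsum_inter_setOf_mem (κ := ℝ) (U := fun x => {t : Icc 0 s₀ | x ≤ t}) hδm₀ hδm
      (fun x _ => (isUpperSet_Ici x).preimage (Subtype.mono_coe _))
      fun x hx => ⟨⟨x, hXm hx⟩, le_refl x⟩
  convert jump_Iio.add jump_Iic using 2 with t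
  rw [hφ t t.2]
  ring

theorem mapsTo (h : IsGraftingFunction s₀ s₁ φ) : MapsTo φ (Icc 0 s₀) (Icc 0 s₁) := by
  obtain ⟨-, -, -, -, -, -, -, -, -, -, -, -, -, hφ⟩ := h
  exact hφ

theorem monotoneOn (h : IsGraftingFunction s₀ s₁ φ) : MonotoneOn φ (Icc 0 s₀) := by
  intro s hs t ht hst
  have sub_le_sub : φ s - s ≤ φ t - t :=
    h.isJumpFunction_sub_id.monotone (show (⟨s, hs⟩ : Icc 0 s₀) ≤ ⟨t, ht⟩ from hst)
  linarith

theorem of_isJumpFunction_sub_id (hφ : MapsTo φ (Icc 0 s₀) (Icc 0 s₁))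
    (h : IsJumpFunction fun t : Icc 0 s₀ => φ t - t) : IsGraftingFunction s₀ s₁ φ := by
  obtain ⟨ι, κ, a, b, w, v, ha, hw₀, hv₀, hw, hv, hsum⟩ := h.exists_eq_tsum_Iio_add_tsum_Iic
  have : Countable ι := countable_of_summable_of_pos hw hw₀
  have : Countable κ := countable_of_summable_of_pos hv hv₀
  let a' : ι → ℝ := fun i => a i
  let b' : κ → ℝ := fun k => b k
  refine ⟨range a', range b', fiberSum a' w, fiberSum b' v,
    countable_range a', countable_range b', range_subset_iff.2 fun i => ⟨(a i).2.1, ?_⟩,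
    range_subset_iff.2 fun k => (b k).2,
    fun _ => fiberSum_pos a' hw hw₀, fun _ => fiberSum_pos b' hv hv₀,
    (summable_fiberSum a' hw).subtype _, (summable_fiberSum b' hv).subtype _, fun t ht => ?_, hφ⟩
  · obtain ⟨t, hat⟩ := not_isMax_iff.1 (ha i)
    exact lt_of_lt_of_le hat t.2.2
  · rw [tsum_fiberSum_range_inter a' hw, tsum_fiberSum_range_inter b' hv, add_assoc]
    exact eq_add_of_sub_eq' (hsum ⟨t, ht⟩)

end IsGraftingFunction

/-- The composition of two grafting functions is a grafting function. -/
theorem isGraftingFunction_comp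
    (s₀ s₁ s₂ : ℝ) (φ₀ φ₁ : ℝ → ℝ)
    (h₀ : IsGraftingFunction s₀ s₁ φ₀) (h₁ : IsGraftingFunction s₁ s₂ φ₁) :
    IsGraftingFunction s₀ s₂ (φ₁ ∘ φ₀) := by
  have mono₀ : Monotone (h₀.mapsTo.restrict φ₀ _ _) := fun s t hst =>
    h₀.monotoneOn s.2 t.2 hst
  refine .of_isJumpFunction_sub_id (h₁.mapsTo.comp h₀.mapsTo) ?_
  convert (h₁.isJumpFunction_sub_id.comp mono₀).add h₀.isJumpFunction_sub_id using 2 with t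
  exact (sub_add_sub_cancel _ _ _).symm
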